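/- Let n, m ≥ 1. There exists a constant C = C(n, m) > 0 such that for every C⁴ map v : B₁ → ℝ^m on the open unit ball B₁ ⊆ ℝⁿ satisfying the biharmonic equation Δ(Δv) = 0 on B₁ and ∫_{B₁} |∇v|² dx < ∞, and for every θ ∈ (0, 1/2]: (i) ∫_{B_θ} |∇v|² dx ≤ C θⁿ ∫_{B₁} |∇v|² dx, and (ii) ∫_{B_θ} ‖v − v_θ‖⁴ dx ≤ C θ^{n+4} ( ∫_{B₁} |∇v|² dx )², where v_θ denotes the average of v over B_θ. -/

import Mathlib

/-!
Both estimates follow from the interior gradient bound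
`sup_{B_{1/2}} |∇v|² ≤ K ∫_{B₁} |∇v|²` with `K` depending only on the dimension. Integrating it
over `B_θ` gives (i). For (ii) it makes `v` Lipschitz on `B_θ`, so that
`‖v - v_θ‖ ≤ 2 θ (K ∫_{B₁} |∇v|²)^{1/2}` there; raise this to the fourth power and integrate.

The gradient bound comes from a mean value formula for biharmonic maps. With the weights
`ηₖ(y) = (1/4 - |y|²)₊ᵏ` put `Mₖu(x, t) = ∫ ηₖ(y) u(x + t y) dy`. Since
`∇ηₖ₊₁ = -2 (k + 1) y ηₖ`, integration by parts gives
`∂ₜ Mₖu = t / (2 (k + 1)) · Mₖ₊₁(Δu)` (`hasDerivAt_wmean`). If `Δ²v = 0`, then `M₂(Δv)(x, ·)` is a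
constant `A` on `[0, 1]`, hence `M₁v(x, t) = (∫ η₁) v(x) + t² A / 8`, and
`3 (∫ η₁) v(x) = 4 M₁v(x, 1/2) - M₁v(x, 1)` (`biharmonic_mean_value`). Differentiating in `x` gives
the same formula for each `∂ᵢv` (`pd_mean_value`), and Cauchy–Schwarz then bounds `|∂ᵢv(x)|` by the
`L²` norm of the gradient (`exists_gradSq_le`).
-/

open MeasureTheory

/-- The `i`-th partial derivative of a map `u : ℝⁿ → ℝᵐ` (as Euclidean spaces). -/
noncomputable def pd {n m : ℕ} (u : EuclideanSpace ℝ (Fin n) → EuclideanSpace ℝ (Fin m))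
    (i : Fin n) (x : EuclideanSpace ℝ (Fin n)) : EuclideanSpace ℝ (Fin m) :=
  fderiv ℝ u x (EuclideanSpace.single i 1)

/-- The componentwise Laplacian `Δu = ∑ i, ∂ᵢ∂ᵢu`. -/
noncomputable def lap {n m : ℕ} (u : EuclideanSpace ℝ (Fin n) → EuclideanSpace ℝ (Fin m))
    (x : EuclideanSpace ℝ (Fin n)) : EuclideanSpace ℝ (Fin m) :=
  ∑ i, pd (pd u i) i x

/-- The squared gradient `|∇u(x)|² = ∑ i, ‖∂ᵢu(x)‖²`. -/
noncomputable def gradSq {n m : ℕ} (u : EuclideanSpace ℝ (Fin n) → EuclideanSpace ℝ (Fin m))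
    (x : EuclideanSpace ℝ (Fin n)) : ℝ :=
  ∑ i, ‖pd u i x‖ ^ 2

open MeasureTheory Metric Set Filter Topology

/-- Abbreviation for the Euclidean space `ℝⁿ`. -/
abbrev Euc (n : ℕ) : Type := EuclideanSpace ℝ (Fin n)

/-! ### The truncated powers `(1/4 - |y|²)₊ᵏ` -/

/-- For `k ≥ 1` the derivative formula holds at the kink `s = 0` too. -/
lemma hasDerivAt_max_pow (k : ℕ) (hk : 1 ≤ k) (s : ℝ) :
    HasDerivAt (fun s : ℝ => max s 0 ^ (k + 1)) ((k + 1) * max s 0 ^ k) s := by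
  rcases lt_trichotomy s 0 with hs | rfl | hs
  · have : (fun s : ℝ => max s 0 ^ (k + 1)) =ᶠ[𝓝 s] fun _ => 0 := by
      filter_upwards [Iio_mem_nhds hs] with r hr
      rw [max_eq_right (le_of_lt hr)]; simp
    rw [max_eq_right hs.le, zero_pow (by omega), mul_zero]
    exact (hasDerivAt_const s (0 : ℝ)).congr_of_eventuallyEq this
  · rw [max_self, zero_pow (by omega), mul_zero]
    rw [hasDerivAt_iff_isLittleO_nhds_zero]
    simp only [zero_add, max_self, smul_zero, sub_zero]
    have h1 : (fun h : ℝ => max h 0 ^ (k + 1) - 0 ^ (k + 1)) =O[𝓝 0] fun h : ℝ => h ^ (k + 1) := by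
      refine Asymptotics.IsBigO.of_bound 1 (Eventually.of_forall fun h => ?_)
      rw [zero_pow (by omega), sub_zero, one_mul, norm_pow, norm_pow]
      gcongr
      rw [Real.norm_eq_abs, Real.norm_eq_abs, abs_of_nonneg (le_max_right _ _)]
      exact max_le (le_abs_self h) (abs_nonneg h)
    refine h1.trans_isLittleO ?_
    simpa using Asymptotics.isLittleO_pow_pow (𝕜 := ℝ) (show 1 < k + 1 by omega)
  · have : (fun s : ℝ => max s 0 ^ (k + 1)) =ᶠ[𝓝 s] fun s => s ^ (k + 1) := by
      filter_upwards [Ioi_mem_nhds hs] with r hr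
      rw [max_eq_left (le_of_lt hr)]
    rw [max_eq_left hs.le]
    have h := (hasDerivAt_pow (k + 1) s).congr_of_eventuallyEq this
    simpa using h

/-- The radial weight `(1/4 - |y|²)₊ᵏ`, supported in the closed ball of radius `1/2`. -/
noncomputable def bmp {n : ℕ} (k : ℕ) (y : Euc n) : ℝ := max (1 / 4 - ‖y‖ ^ 2) 0 ^ k

lemma bmp_nonneg {n : ℕ} (k : ℕ) (y : Euc n) : 0 ≤ bmp k y := pow_nonneg (le_max_right _ _) _

lemma continuous_bmp {n : ℕ} (k : ℕ) : Continuous (bmp k : Euc n → ℝ) := by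
  unfold bmp; fun_prop

lemma bmp_eq_zero {n : ℕ} {k : ℕ} (hk : 1 ≤ k) {y : Euc n} (hy : 1 / 2 ≤ ‖y‖) : bmp k y = 0 := by
  unfold bmp
  rw [max_eq_right (by nlinarith), zero_pow (by omega)]

lemma hasCompactSupport_bmp {n : ℕ} {k : ℕ} (hk : 1 ≤ k) :
    HasCompactSupport (bmp k : Euc n → ℝ) := by
  refine HasCompactSupport.intro (isCompact_closedBall (0 : Euc n) (1 / 2)) fun y hy => ?_
  refine bmp_eq_zero hk ?_
  simp only [mem_closedBall, dist_zero_right, not_le] at hy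
  exact hy.le

lemma integral_bmp_pos {n : ℕ} {k : ℕ} (hk : 1 ≤ k) : 0 < ∫ y : Euc n, bmp k y := by
  refine (continuous_bmp k).integral_pos_of_hasCompactSupport_nonneg_nonzero
    (hasCompactSupport_bmp hk) (bmp_nonneg k) (x := 0) ?_
  unfold bmp
  norm_num

/-- The gradient of `bmp (k + 1)` at `y` is `-2 (k + 1) bmp k y` times `y`. -/
lemma hasFDerivAt_bmp {n : ℕ} {k : ℕ} (hk : 1 ≤ k) (y : Euc n) :
    HasFDerivAt (bmp (k + 1) : Euc n → ℝ)
      ((-(2 * (k + 1)) * bmp k y) • innerSL ℝ y) y := by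
  have h1 : HasFDerivAt (fun y : Euc n => 1 / 4 - ‖y‖ ^ 2) (-((2 : ℝ) • innerSL ℝ y)) y := by
    have h := ((hasStrictFDerivAt_norm_sq y).hasFDerivAt).const_sub (1 / 4 : ℝ)
    rwa [← Nat.cast_smul_eq_nsmul ℝ, Nat.cast_ofNat] at h
  have h2 := (hasDerivAt_max_pow k hk (1 / 4 - ‖y‖ ^ 2)).comp_hasFDerivAt y h1
  refine h2.congr_fderiv ?_
  ext z
  simp [bmp]
  ring

/-! ### Calculus for weighted means -/

lemma contDiff_pd {n m : ℕ} {r s : ℕ} (hrs : s + 1 ≤ r) {u : Euc n → Euc m} (hu : ContDiff ℝ r u)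
    (i : Fin n) : ContDiff ℝ s (pd u i) := by
  unfold pd
  exact (hu.fderiv_right (m := s) (by exact_mod_cast hrs)).clm_apply contDiff_const

lemma contDiff_lap {n m : ℕ} {r s : ℕ} (hrs : s + 2 ≤ r) {u : Euc n → Euc m} (hu : ContDiff ℝ r u) :
    ContDiff ℝ s (lap u) := by
  unfold lap
  exact ContDiff.sum fun i _ => contDiff_pd (r := s + 1) le_rfl (contDiff_pd (by omega) hu i) i

/-- Differentiation under the integral sign for integrands vanishing off a fixed compact set. -/
lemma hasDerivAt_integral_of_compact {n m : ℕ} {F F' : ℝ → Euc n → Euc m} {S : Set (Euc n)}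
    (hS : IsCompact S) (hF : ∀ s, Continuous (F s)) (hF' : Continuous (Function.uncurry F'))
    (hd : ∀ s y, HasDerivAt (fun s => F s y) (F' s y) s) (h0 : ∀ s, ∀ y ∉ S, F s y = 0) (s₀ : ℝ) :
    HasDerivAt (fun s => ∫ y, F s y) (∫ y, F' s₀ y) s₀ := by
  have h0' : ∀ s, ∀ y ∉ S, F' s y = 0 := by
    intro s y hy
    have h1 : (fun s => F s y) = fun _ => 0 := funext fun s => h0 s y hy
    have h2 := hd s y
    rw [h1] at h2
    exact h2.unique (hasDerivAt_const s 0)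
  obtain ⟨C, hC⟩ := ((isCompact_closedBall s₀ 1).prod hS).exists_bound_of_continuousOn
    hF'.continuousOn
  have hc : Continuous (F' s₀) := hF'.comp (Continuous.prodMk_right s₀)
  refine (hasDerivAt_integral_of_dominated_loc_of_deriv_le (closedBall_mem_nhds s₀ one_pos)
    (Eventually.of_forall fun s => (hF s).aestronglyMeasurable)
    ((hF s₀).integrable_of_hasCompactSupport (HasCompactSupport.intro hS (h0 s₀)))
    hc.aestronglyMeasurable (bound := S.indicator fun _ => C) (Eventually.of_forall ?_)
    ?_ (Eventually.of_forall fun y s _ => hd s y)).2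
  · intro y s hs
    by_cases hy : y ∈ S
    · rw [indicator_of_mem hy]
      exact hC (s, y) ⟨hs, hy⟩
    · rw [indicator_of_notMem hy, h0' s y hy, norm_zero]
  · rw [integrable_indicator_iff hS.measurableSet]
    exact integrableOn_const hS.measure_lt_top.ne

/-- The weighted mean `∫ (1/4 - |y|²)₊ᵏ u (x + t y) dy`. -/
noncomputable def wmean {n m : ℕ} (k : ℕ) (u : Euc n → Euc m) (x : Euc n) (t : ℝ) : Euc m :=
  ∫ y, bmp k y • u (x + t • y)

lemma hasDerivAt_wmean_aux {n m : ℕ} {k : ℕ} (hk : 1 ≤ k) {u : Euc n → Euc m} (hu : ContDiff ℝ 1 u)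
    (x : Euc n) (t : ℝ) :
    HasDerivAt (wmean k u x) (∫ y, bmp k y • fderiv ℝ u (x + t • y) y) t := by
  have hb := continuous_bmp (n := n) k
  have hu0 := hu.continuous
  have hu' : Continuous (fderiv ℝ u) := hu.continuous_fderiv one_ne_zero
  refine hasDerivAt_integral_of_compact (F := fun s y => bmp k y • u (x + s • y))
    (F' := fun s y => bmp k y • fderiv ℝ u (x + s • y) y)
    (isCompact_closedBall (0 : Euc n) (1 / 2)) ?_ ?_ ?_ ?_ t
  · intro s; fun_prop
  · simp only [Function.uncurry_def]
    have : Continuous fun p : ℝ × Euc n => fderiv ℝ u (x + p.1 • p.2) p.2 :=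
      (hu'.comp (by fun_prop)).clm_apply continuous_snd
    exact (hb.comp continuous_snd).smul this
  · intro s y
    have h1 : HasDerivAt (fun s : ℝ => x + s • y) y s := by
      simpa using ((hasDerivAt_id s).smul_const y).const_add x
    exact (((hu.differentiable one_ne_zero _).hasFDerivAt).comp_hasDerivAt s h1).const_smul
      (bmp k y)
  · intro s y hy
    simp only [mem_closedBall, dist_zero_right, not_le] at hy
    rw [bmp_eq_zero hk hy.le, zero_smul]

/-- Translating the centre `x` in the direction `eᵢ` replaces `u` by `∂ᵢu` in the mean. -/
lemma hasDerivAt_wmean_translate {n m : ℕ} {k : ℕ} (hk : 1 ≤ k) {u : Euc n → Euc m}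
    (hu : ContDiff ℝ 1 u) (x : Euc n) (t : ℝ) (i : Fin n) :
    HasDerivAt (fun s : ℝ => wmean k u (x + s • EuclideanSpace.single i 1) t)
      (wmean k (pd u i) x t) 0 := by
  have hb := continuous_bmp (n := n) k
  have hu0 := hu.continuous
  have hu' : Continuous (fderiv ℝ u) := hu.continuous_fderiv one_ne_zero
  set e : Euc n := EuclideanSpace.single i 1 with he
  have := hasDerivAt_integral_of_compact (F := fun s y => bmp k y • u (x + s • e + t • y))
    (F' := fun s y => bmp k y • fderiv ℝ u (x + s • e + t • y) e)
    (isCompact_closedBall (0 : Euc n) (1 / 2)) ?_ ?_ ?_ ?_ 0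
  · simpa [wmean, pd] using this
  · intro s; fun_prop
  · simp only [Function.uncurry_def]
    have : Continuous fun p : ℝ × Euc n => fderiv ℝ u (x + p.1 • e + t • p.2) e :=
      (hu'.comp (by fun_prop)).clm_apply continuous_const
    exact (hb.comp continuous_snd).smul this
  · intro s y
    have h1 : HasDerivAt (fun s : ℝ => x + s • e + t • y) e s := by
      simpa using (((hasDerivAt_id s).smul_const e).const_add x).add_const (t • y)
    exact (((hu.differentiable one_ne_zero _).hasFDerivAt).comp_hasDerivAt s h1).const_smul
      (bmp k y)
  · intro s y hy
    simp only [mem_closedBall, dist_zero_right, not_le] at hy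
    rw [bmp_eq_zero hk hy.le, zero_smul]

lemma integrable_bmp_smul {n m : ℕ} {k : ℕ} (hk : 1 ≤ k) {f : Euc n → Euc m} (hf : Continuous f) :
    Integrable fun y => bmp k y • f y :=
  ((continuous_bmp k).smul hf).integrable_of_hasCompactSupport
    ((hasCompactSupport_bmp hk).smul_right)

/-- Since `y ↦ y bmp k y` is a multiple of `∇ bmp (k + 1)`, an integration by parts turns the
`t`-derivative of a weighted mean of `u` into a weighted mean of `Δu`. -/
lemma hasDerivAt_wmean {n m : ℕ} {k : ℕ} (hk : 1 ≤ k) {u : Euc n → Euc m} (hu : ContDiff ℝ 2 u)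
    (x : Euc n) (t : ℝ) :
    HasDerivAt (wmean k u x) ((t / (2 * (k + 1))) • wmean (k + 1) (lap u) x t) t := by
  have hu1 : ContDiff ℝ 1 u := hu.of_le (by norm_num)
  have hpd : ∀ i, ContDiff ℝ 1 (pd u i) := fun i => contDiff_pd (r := 2) (s := 1) le_rfl hu i
  have hpd0 : ∀ i, Continuous (pd u i) := fun i => (hpd i).continuous
  have hpd2 : ∀ i, Continuous (pd (pd u i) i) := fun i =>
    (contDiff_pd (r := 1) (s := 0) le_rfl (hpd i) i).continuous
  have hk0 : (2 * ((k : ℝ) + 1)) ≠ 0 := by positivity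
  refine (hasDerivAt_wmean_aux hk hu1 x t).congr_deriv ?_
  have hparts : ∀ i : Fin n, ∫ y : Euc n, (y i * bmp k y) • pd u i (x + t • y) =
      (t / (2 * (k + 1))) • ∫ y : Euc n, bmp (k + 1) y • pd (pd u i) i (x + t • y) := by
    intro i
    have hfd : ∀ y : Euc n, fderiv ℝ (bmp (k + 1)) y (EuclideanSpace.single i 1) =
        -(2 * (k + 1)) * (y i * bmp k y) := by
      intro y
      rw [(hasFDerivAt_bmp hk y).fderiv]
      simp [EuclideanSpace.inner_single_right]
      ring
    have hg : ∀ y : Euc n, HasFDerivAt (fun y => pd u i (x + t • y))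
        ((fderiv ℝ (pd u i) (x + t • y)).comp (t • ContinuousLinearMap.id ℝ (Euc n))) y := by
      intro y
      have h1 : HasFDerivAt (fun y : Euc n => x + t • y) (t • ContinuousLinearMap.id ℝ (Euc n)) y :=
        ((hasFDerivAt_id y).const_smul t).const_add x
      exact (((hpd i).differentiable one_ne_zero _).hasFDerivAt).comp y h1
    have hgd : ∀ y : Euc n, fderiv ℝ (fun y => pd u i (x + t • y)) y (EuclideanSpace.single i 1) =
        t • pd (pd u i) i (x + t • y) := by
      intro y
      rw [(hg y).fderiv]
      simp [pd]
    have hc1 := hpd0 i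
    have hc2 := hpd2 i
    have key := integral_smul_fderiv_eq_neg_fderiv_smul_of_integrable (μ := volume)
      (f := (bmp (k + 1) : Euc n → ℝ)) (g := fun y => pd u i (x + t • y))
      (v := EuclideanSpace.single i 1) ?_ ?_ ?_
      (fun y _ => (hasFDerivAt_bmp hk y).differentiableAt) (fun y _ => (hg y).differentiableAt)
    · simp only [hfd, hgd] at key
      have e1 : ∀ y : Euc n, bmp (k + 1) y • t • pd (pd u i) i (x + t • y) =
          t • (bmp (k + 1) y • pd (pd u i) i (x + t • y)) := fun y => smul_comm _ _ _
      have e2 : ∀ y : Euc n, (-(2 * ((k : ℝ) + 1)) * (y i * bmp k y)) • pd u i (x + t • y) =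
          (-(2 * ((k : ℝ) + 1))) • ((y i * bmp k y) • pd u i (x + t • y)) := fun y => mul_smul _ _ _
      simp only [e1, e2, integral_smul] at key
      rw [neg_smul, neg_neg] at key
      rw [div_eq_inv_mul, mul_smul, key, smul_smul, inv_mul_cancel₀ hk0, one_smul]
    · simp only [hfd]
      have : ∀ y : Euc n, (-(2 * ((k : ℝ) + 1)) * (y i * bmp k y)) • pd u i (x + t • y) =
          bmp k y • ((-(2 * ((k : ℝ) + 1)) * y i) • pd u i (x + t • y)) := by
        intro y; rw [smul_smul]; congr 1; ring
      simp only [this]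
      exact integrable_bmp_smul hk (by fun_prop)
    · simp only [hgd]
      exact integrable_bmp_smul (by omega) (by fun_prop)
    · exact integrable_bmp_smul (by omega) (by fun_prop)
  have hexp : ∀ y : Euc n, bmp k y • fderiv ℝ u (x + t • y) y =
      ∑ i, (y i * bmp k y) • pd u i (x + t • y) := by
    intro y
    have hy : y = ∑ i, y i • (EuclideanSpace.single i 1 : Euc n) := by
      ext j
      simp [Finset.sum_apply, Pi.single_apply]
    conv_lhs => rw [hy, ← hy]; arg 2; arg 2; rw [hy]
    rw [map_sum, Finset.smul_sum]
    refine Finset.sum_congr rfl fun i _ => ?_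
    rw [map_smul, smul_smul, mul_comm, pd]
  simp only [hexp]
  rw [integral_finsetSum, Finset.sum_congr rfl fun i _ => hparts i, ← Finset.smul_sum,
    ← integral_finsetSum]
  · simp only [wmean, lap, Finset.smul_sum]
  · intro i _
    have := hpd2 i
    exact integrable_bmp_smul (by omega) (by fun_prop)
  · intro i _
    have := hpd0 i
    have e : ∀ y : Euc n, (y i * bmp k y) • pd u i (x + t • y) =
      bmp k y • (y i • pd u i (x + t • y)) := by
      intro y; rw [smul_smul]; congr 1; ring
    simp only [e]
    exact integrable_bmp_smul hk (by fun_prop)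

lemma wmean_congr {n m : ℕ} {k : ℕ} (hk : 1 ≤ k) {u w : Euc n → Euc m} {x : Euc n} {t : ℝ}
    (h : ∀ y : Euc n, ‖y‖ < 1 / 2 → u (x + t • y) = w (x + t • y)) :
    wmean k u x t = wmean k w x t := by
  refine integral_congr_ae (Eventually.of_forall fun y => ?_)
  rcases lt_or_ge ‖y‖ (1 / 2) with hy | hy
  · simp only [h y hy]
  · simp only [bmp_eq_zero hk hy, zero_smul]

/-! ### The mean value formula -/

lemma norm_smul_lt_half {n : ℕ} {t : ℝ} (ht0 : 0 ≤ t) (ht : t ≤ 1) {y : Euc n}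
    (hy : ‖y‖ < 1 / 2) : ‖t • y‖ < 1 / 2 := by
  rw [norm_smul, Real.norm_eq_abs, abs_of_nonneg ht0]
  nlinarith [norm_nonneg y]

/-- A mean value formula for biharmonic maps: the weighted mean is of the form `a + b t²`, and
comparing the scales `t = 1/2` and `t = 1` eliminates the quadratic term. -/
lemma biharmonic_mean_value {n m : ℕ} {v : Euc n → Euc m} (hv : ContDiff ℝ 4 v) {x : Euc n}
    (hx : ∀ y : Euc n, ‖y‖ < 1 / 2 → lap (lap v) (x + y) = 0) :
    (3 * ∫ y : Euc n, bmp 1 y) • v x = (4 : ℝ) • wmean 1 v x (1 / 2) - wmean 1 v x 1 := by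
  have hlap : ContDiff ℝ 2 (lap v) := contDiff_lap (r := 4) (s := 2) le_rfl hv
  have hv2 : ContDiff ℝ 2 v := hv.of_le (by norm_num)
  set A := wmean 2 (lap v) x 0 with hA
  have hG : ∀ t ∈ Icc (0 : ℝ) 1, wmean 2 (lap v) x t = A := by
    refine constant_of_has_deriv_right_zero
      (fun t _ => (hasDerivAt_wmean one_le_two hlap x t).continuousAt.continuousWithinAt) ?_
    intro t ht
    have h0 : wmean (2 + 1) (lap (lap v)) x t = 0 := by
      rw [wmean_congr (w := fun _ => 0) (by norm_num)
        fun y hy => hx _ (norm_smul_lt_half ht.1 ht.2.le hy)]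
      simp [wmean]
    have h := hasDerivAt_wmean one_le_two hlap x t
    rw [h0, smul_zero] at h
    exact h.hasDerivWithinAt
  have hd : ∀ t : ℝ, HasDerivAt (fun t => wmean 1 v x t - (t ^ 2 / 8) • A)
      ((t / 4) • wmean 2 (lap v) x t - (t / 4) • A) t := by
    intro t
    have h1 := hasDerivAt_wmean le_rfl hv2 x t
    have h2 : HasDerivAt (fun t : ℝ => t ^ 2 / 8) (t / 4) t := by
      refine ((hasDerivAt_pow 2 t).div_const 8).congr_deriv ?_
      norm_num
      ring
    refine (h1.sub (h2.smul_const A)).congr_deriv ?_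
    norm_num
  have hH := constant_of_has_deriv_right_zero (a := 0) (b := 1)
    (fun t _ => (hd t).continuousAt.continuousWithinAt) (fun t ht => by
      have h := hd t
      rw [hG t ⟨ht.1, ht.2.le⟩, sub_self] at h
      exact h.hasDerivWithinAt)
  have h1 := hH 1 (by norm_num)
  have h2 := hH (1 / 2) (by norm_num)
  have h3 : wmean 1 v x 0 = (∫ y : Euc n, bmp 1 y) • v x := by
    simp only [wmean, zero_smul, add_zero]
    exact integral_smul_const _ _
  simp only [h3] at h1 h2
  rw [sub_eq_iff_eq_add] at h1 h2
  rw [h1, h2]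
  module

lemma pd_congr {n m : ℕ} {u w : Euc n → Euc m} {x : Euc n} (h : u =ᶠ[𝓝 x] w) (i : Fin n) :
    pd u i =ᶠ[𝓝 x] pd w i := by
  filter_upwards [h.fderiv (𝕜 := ℝ)] with y hy
  rw [pd, pd, hy]

lemma lap_congr {n m : ℕ} {u w : Euc n → Euc m} {x : Euc n} (h : u =ᶠ[𝓝 x] w) :
    lap u =ᶠ[𝓝 x] lap w := by
  have : ∀ᶠ y in 𝓝 x, ∀ i, pd (pd u i) i y = pd (pd w i) i y :=
    eventually_all.2 fun i => pd_congr (pd_congr h i) i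
  filter_upwards [this] with y hy
  simp only [lap, hy]

/-- Multiplying by a bump function gives a globally `C⁴` map with the same germs as `v` on a
smaller ball; this makes all integrands globally regular. -/
lemma exists_global_extension {n m : ℕ} {v : Euc n → Euc m} (hv : ContDiffOn ℝ 4 v (ball 0 1))
    {r : ℝ} (hr0 : 0 < r) (hr : r < 1) :
    ∃ w : Euc n → Euc m, ContDiff ℝ 4 w ∧ ∀ x ∈ ball (0 : Euc n) r, w =ᶠ[𝓝 x] v := by
  let χ : ContDiffBump (0 : Euc n) := ⟨r, (r + 1) / 2, hr0, by linarith⟩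
  refine ⟨fun x => χ x • v x, ?_, ?_⟩
  · rw [contDiff_iff_contDiffAt]
    intro x
    by_cases hx : x ∈ ball (0 : Euc n) 1
    · exact χ.contDiffAt.smul (hv.contDiffAt (isOpen_ball.mem_nhds hx))
    · have hx' : x ∈ (closedBall (0 : Euc n) ((r + 1) / 2))ᶜ := by
        simp only [mem_ball, dist_zero_right, not_lt] at hx
        simp only [mem_compl_iff, mem_closedBall, dist_zero_right, not_le]
        linarith
      refine (contDiffAt_const (c := (0 : Euc m))).congr_of_eventuallyEq ?_
      filter_upwards [isClosed_closedBall.isOpen_compl.mem_nhds hx'] with y hy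
      have : χ y = 0 := by
        refine χ.zero_of_le_dist ?_
        simp only [mem_compl_iff, mem_closedBall, not_le] at hy
        exact hy.le
      rw [this, zero_smul]
  · intro x hx
    filter_upwards [χ.eventuallyEq_one_of_mem_ball hx] with y hy
    rw [hy, Pi.one_apply, one_smul]

/-- The differentiated mean value formula, for maps that are biharmonic on the unit ball only. -/
lemma pd_mean_value {n m : ℕ} {v : Euc n → Euc m} (hv : ContDiffOn ℝ 4 v (ball 0 1))
    (hb : ∀ x ∈ ball (0 : Euc n) 1, lap (lap v) x = 0) {x : Euc n} (hx : ‖x‖ < 1 / 2)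
    (i : Fin n) :
    (3 * ∫ y : Euc n, bmp 1 y) • pd v i x =
      (4 : ℝ) • wmean 1 (pd v i) x (1 / 2) - wmean 1 (pd v i) x 1 := by
  -- a radius strictly between `‖x‖` and `1/2`, leaving room to differentiate at `x`
  obtain ⟨s, hxs, hs⟩ := exists_between hx
  have hs0 : 0 < s := (norm_nonneg x).trans_lt hxs
  obtain ⟨w, hw, hwv⟩ := exists_global_extension hv (r := s + 1 / 2) (by linarith) (by linarith)
  have hmem : ∀ z : Euc n, ‖z‖ < s → ∀ y : Euc n, ‖y‖ < 1 / 2 →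
      z + y ∈ ball (0 : Euc n) (s + 1 / 2) := by
    intro z hz y hy
    rw [mem_ball, dist_zero_right]
    exact (norm_add_le z y).trans_lt (by linarith)
  have hform : ∀ z : Euc n, ‖z‖ < s → (3 * ∫ y : Euc n, bmp 1 y) • w z =
      (4 : ℝ) • wmean 1 w z (1 / 2) - wmean 1 w z 1 := by
    intro z hz
    refine biharmonic_mean_value hw fun y hy => ?_
    have h := hmem z hz y hy
    rw [(lap_congr (lap_congr (hwv _ h))).eq_of_nhds]
    exact hb _ (ball_subset_ball (by linarith) h)
  have hw1 : ContDiff ℝ 1 w := hw.of_le (by norm_num)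
  set e : Euc n := EuclideanSpace.single i 1 with he
  have hL : HasDerivAt (fun s : ℝ => (3 * ∫ y : Euc n, bmp 1 y) • w (x + s • e))
      ((3 * ∫ y : Euc n, bmp 1 y) • pd w i x) 0 := by
    have h1 : HasDerivAt (fun s : ℝ => x + s • e) e 0 := by
      simpa using ((hasDerivAt_id (0 : ℝ)).smul_const e).const_add x
    have h2 : HasFDerivAt w (fderiv ℝ w x) (x + (0 : ℝ) • e) := by
      rw [zero_smul, add_zero]
      exact (hw1.differentiable one_ne_zero x).hasFDerivAt
    exact (h2.comp_hasDerivAt (0 : ℝ) h1).const_smul (3 * ∫ y : Euc n, bmp 1 y)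
  have hR := ((hasDerivAt_wmean_translate le_rfl hw1 x (1 / 2) i).const_smul (4 : ℝ)).sub
    (hasDerivAt_wmean_translate le_rfl hw1 x 1 i)
  have hev : (fun s : ℝ => (3 * ∫ y : Euc n, bmp 1 y) • w (x + s • e)) =ᶠ[𝓝 0]
      fun r : ℝ => (4 : ℝ) • wmean 1 w (x + r • e) (1 / 2) - wmean 1 w (x + r • e) 1 := by
    have hc : ContinuousAt (fun r : ℝ => ‖x + r • e‖) 0 := by fun_prop
    have : ∀ᶠ r in 𝓝 (0 : ℝ), ‖x + r • e‖ < s := hc.eventually_lt_const (by simpa using hxs)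
    filter_upwards [this] with r hr using hform _ hr
  have hfin := (hL.congr_of_eventuallyEq hev.symm).unique hR
  have hpd : ∀ t : ℝ, 0 ≤ t → t ≤ 1 → wmean 1 (pd w i) x t = wmean 1 (pd v i) x t := by
    intro t ht0 ht
    refine wmean_congr le_rfl fun y hy => ?_
    exact (pd_congr (hwv _ (hmem x hxs _ (norm_smul_lt_half ht0 ht hy))) i).eq_of_nhds
  have hxx : pd w i x = pd v i x := by
    refine (pd_congr (hwv x ?_) i).eq_of_nhds
    rw [mem_ball, dist_zero_right]
    linarith
  rw [hpd (1 / 2) (by norm_num) (by norm_num), hpd 1 zero_le_one le_rfl, hxx] at hfin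
  exact hfin

/-! ### The pointwise gradient bound and the decay estimates -/

lemma gradSq_nonneg {n m : ℕ} (v : Euc n → Euc m) (x : Euc n) : 0 ≤ gradSq v x :=
  Finset.sum_nonneg fun _ _ => sq_nonneg _

lemma norm_pd_le_sqrt {n m : ℕ} (v : Euc n → Euc m) (i : Fin n) (x : Euc n) :
    ‖pd v i x‖ ≤ √(gradSq v x) :=
  Real.le_sqrt_of_sq_le
    (Finset.single_le_sum (f := fun i => ‖pd v i x‖ ^ 2) (fun _ _ => sq_nonneg _)
      (Finset.mem_univ i))

lemma norm_fderiv_le_sqrt {n m : ℕ} (v : Euc n → Euc m) (x : Euc n) :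
    ‖fderiv ℝ v x‖ ≤ √(gradSq v x) := by
  refine ContinuousLinearMap.opNorm_le_bound _ (Real.sqrt_nonneg _) fun y => ?_
  have hy : y = ∑ i, y i • (EuclideanSpace.single i 1 : Euc n) := by
    ext j
    simp [Finset.sum_apply, Pi.single_apply]
  have h1 : fderiv ℝ v x y = ∑ i, y i • pd v i x := by
    conv_lhs => rw [hy]
    simp only [map_sum, map_smul, pd]
  calc ‖fderiv ℝ v x y‖ ≤ ∑ i, ‖pd v i x‖ * ‖y i‖ := by
        rw [h1]
        refine (norm_sum_le _ _).trans (Finset.sum_le_sum fun i _ => ?_)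
        rw [norm_smul, mul_comm]
    _ ≤ √(∑ i, ‖pd v i x‖ ^ 2) * √(∑ i, ‖y i‖ ^ 2) := Real.sum_mul_le_sqrt_mul_sqrt _ _ _
    _ = √(gradSq v x) * ‖y‖ := by rw [EuclideanSpace.norm_eq]; rfl

/-- Cauchy–Schwarz followed by the substitution `z = x + t y`, which costs the factor `t⁻ⁿ`. The
points `x + t y` with `y` in the support of the weight stay inside the unit ball. -/
lemma norm_wmean_pd_le {n m : ℕ} {v : Euc n → Euc m}
    (hi : IntegrableOn (gradSq v) (ball (0 : Euc n) 1)) {x : Euc n} (hx : ‖x‖ < 1 / 2)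
    {t : ℝ} (ht0 : 0 < t) (ht : t ≤ 1) (i : Fin n) :
    ‖wmean 1 (pd v i) x t‖ ≤
      √(∫ y : Euc n, bmp 1 y ^ 2) * √((t ^ n)⁻¹ * ∫ y in ball (0 : Euc n) 1, gradSq v y) := by
  set g : Euc n → ℝ := (ball (0 : Euc n) 1).indicator (gradSq v) with hg
  have hg0 : ∀ y, 0 ≤ g y := fun y => indicator_nonneg (fun z _ => gradSq_nonneg v z) y
  have hgi : Integrable g := (integrable_indicator_iff measurableSet_ball).2 hi
  have hgc : Integrable fun y => g (x + t • y) := (hgi.comp_add_left x).comp_smul ht0.ne'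
  have hgI : ∫ y, g (x + t • y) = (t ^ n)⁻¹ * ∫ y in ball (0 : Euc n) 1, gradSq v y := by
    rw [Measure.integral_comp_smul volume (fun z => g (x + z)) t, integral_add_left_eq_self g x,
      hg, integral_indicator measurableSet_ball, finrank_euclideanSpace_fin, smul_eq_mul,
      abs_of_pos (by positivity)]
  have hsq : ∀ y, √(g (x + t • y)) ^ 2 = g (x + t • y) := fun y => Real.sq_sqrt (hg0 _)
  have hm2 : MemLp (fun y => √(g (x + t • y))) 2 := by
    rw [memLp_two_iff_integrable_sq
      (Real.continuous_sqrt.comp_aestronglyMeasurable hgc.aestronglyMeasurable)]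
    simpa only [hsq] using hgc
  have hm1 : MemLp (bmp 1 : Euc n → ℝ) 2 :=
    (continuous_bmp 1).memLp_of_hasCompactSupport (hasCompactSupport_bmp le_rfl)
  have hcs := integral_mul_le_Lp_mul_Lq_of_nonneg (μ := (volume : Measure (Euc n)))
    Real.HolderConjugate.two_two (f := bmp 1) (g := fun y => √(g (x + t • y)))
    (Eventually.of_forall fun y => bmp_nonneg 1 y) (Eventually.of_forall fun y => Real.sqrt_nonneg _)
    (by simpa using hm1) (by simpa using hm2)
  simp only [Real.rpow_two, hsq, hgI, ← Real.sqrt_eq_rpow] at hcs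
  refine le_trans ?_ hcs
  refine norm_integral_le_of_norm_le (hm1.integrable_mul hm2) (Eventually.of_forall fun y => ?_)
  rw [norm_smul, Real.norm_of_nonneg (bmp_nonneg 1 y)]
  rcases lt_or_ge ‖y‖ (1 / 2) with hy | hy
  · have hmem : x + t • y ∈ ball (0 : Euc n) 1 := by
      rw [mem_ball, dist_zero_right]
      have := norm_smul_lt_half ht0.le ht hy
      exact (norm_add_le _ _).trans_lt (by linarith)
    simp only [hg, indicator_of_mem hmem]
    exact mul_le_mul_of_nonneg_left (norm_pd_le_sqrt v i _) (bmp_nonneg 1 y)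
  · simp only [bmp_eq_zero le_rfl hy, zero_mul, le_refl]

/-- The interior gradient bound `sup_{B_{1/2}} |∇v|² ≤ K ∫_{B₁} |∇v|²`. -/
lemma exists_gradSq_le (n m : ℕ) : ∃ K : ℝ, 0 < K ∧ ∀ v : Euc n → Euc m,
    ContDiffOn ℝ 4 v (ball 0 1) → (∀ x ∈ ball (0 : Euc n) 1, lap (lap v) x = 0) →
    IntegrableOn (gradSq v) (ball (0 : Euc n) 1) → ∀ x : Euc n, ‖x‖ < 1 / 2 →
    gradSq v x ≤ K * ∫ y in ball (0 : Euc n) 1, gradSq v y := by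
  set c := ∫ y : Euc n, bmp 1 y with hc
  have hc0 : 0 < c := integral_bmp_pos le_rfl
  set a := ∫ y : Euc n, bmp 1 y ^ 2 with ha
  set L := (4 * (√a * √(2 ^ n)) + √a) / (3 * c) with hL
  refine ⟨n * L ^ 2 + 1, by positivity, fun v hv hb hi x hx => ?_⟩
  set E := ∫ y in ball (0 : Euc n) 1, gradSq v y with hE
  have hE0 : 0 ≤ E := integral_nonneg fun y => gradSq_nonneg v y
  have hpd : ∀ i, ‖pd v i x‖ ^ 2 ≤ L ^ 2 * E := by
    intro i
    have h1 := norm_wmean_pd_le hi hx (t := 1 / 2) (by norm_num) (by norm_num) i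
    have h2 := norm_wmean_pd_le hi hx (t := 1) one_pos le_rfl i
    rw [← ha, ← hE] at h1 h2
    have e1 : (((1 : ℝ) / 2) ^ n)⁻¹ = 2 ^ n := by rw [← inv_pow]; norm_num
    rw [e1, Real.sqrt_mul (by positivity)] at h1
    rw [one_pow, inv_one, one_mul] at h2
    have h3 := congrArg norm (pd_mean_value hv hb hx i)
    rw [norm_smul, ← hc, Real.norm_of_nonneg (by positivity)] at h3
    have h4 : 3 * c * ‖pd v i x‖ ≤ (4 * (√a * √(2 ^ n)) + √a) * √E := by
      rw [h3]
      refine (norm_sub_le _ _).trans ?_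
      rw [norm_smul, Real.norm_of_nonneg (by norm_num : (0 : ℝ) ≤ 4)]
      linarith
    have h5 : ‖pd v i x‖ ≤ L * √E := by
      rw [hL, div_mul_eq_mul_div, le_div_iff₀ (by positivity)]
      linarith
    calc ‖pd v i x‖ ^ 2 ≤ (L * √E) ^ 2 := by gcongr
      _ = L ^ 2 * E := by rw [mul_pow, Real.sq_sqrt hE0]
  calc gradSq v x ≤ ∑ _i : Fin n, L ^ 2 * E := Finset.sum_le_sum fun i _ => hpd i
    _ = n * L ^ 2 * E := by simp; ring
    _ ≤ (n * L ^ 2 + 1) * E := by linarith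

/-- The interior decay estimates (3.6) for biharmonic functions, used in the blow-up
argument of Lemma 3.1: there is `C = C(n,m) > 0` such that for every C⁴ map
`v : B₁ ⊆ ℝⁿ → ℝᵐ` with `Δ²v = 0` on `B₁` and `∫_{B₁} |∇v|² < ∞`, and every
`θ ∈ (0, 1/2]`:
(i) `∫_{B_θ} |∇v|² ≤ C θⁿ ∫_{B₁} |∇v|²`, and
(ii) `∫_{B_θ} ‖v - v_θ‖⁴ ≤ C θ^{n+4} (∫_{B₁} |∇v|²)²`, with `v_θ` the average of `v`
over `B_θ`. -/
theorem stmt14 (n m : ℕ) (hn : 1 ≤ n) (hm : 1 ≤ m) :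
    ∃ C : ℝ, 0 < C ∧
    ∀ v : EuclideanSpace ℝ (Fin n) → EuclideanSpace ℝ (Fin m),
      ContDiffOn ℝ 4 v (Metric.ball 0 1) →
      (∀ x ∈ Metric.ball (0 : EuclideanSpace ℝ (Fin n)) 1, lap (fun y => lap v y) x = 0) →
      IntegrableOn (fun x => gradSq v x) (Metric.ball (0 : EuclideanSpace ℝ (Fin n)) 1) →
    ∀ θ : ℝ, θ ∈ Set.Ioc (0 : ℝ) (1 / 2) →
      ((∫ x in Metric.ball (0 : EuclideanSpace ℝ (Fin n)) θ, gradSq v x) ≤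
        C * θ ^ n * (∫ x in Metric.ball (0 : EuclideanSpace ℝ (Fin n)) 1, gradSq v x)) ∧
      ((∫ x in Metric.ball (0 : EuclideanSpace ℝ (Fin n)) θ,
          ‖v x - (volume (Metric.ball (0 : EuclideanSpace ℝ (Fin n)) θ)).toReal⁻¹ •
            (∫ y in Metric.ball (0 : EuclideanSpace ℝ (Fin n)) θ, v y)‖ ^ 4) ≤
        C * θ ^ (n + 4) *
          (∫ x in Metric.ball (0 : EuclideanSpace ℝ (Fin n)) 1, gradSq v x) ^ 2) := by
  obtain ⟨K, hK, hgrad⟩ := exists_gradSq_le n m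
  set V := volume.real (ball (0 : Euc n) 1) with hV
  have hV0 : 0 ≤ V := measureReal_nonneg
  refine ⟨K * V + 16 * K ^ 2 * V + 1, by positivity, fun v hv hb hi θ hθ => ?_⟩
  obtain ⟨hθ0, hθ1⟩ := hθ
  have hg := hgrad v hv hb hi
  set E := ∫ y in ball (0 : Euc n) 1, gradSq v y with hE
  have hE0 : 0 ≤ E := integral_nonneg fun y => gradSq_nonneg v y
  have hVθ : volume.real (ball (0 : Euc n) θ) = θ ^ n * V := by
    rw [hV, measureReal_def, Measure.addHaar_ball_of_pos _ _ hθ0, ENNReal.toReal_mul,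
      finrank_euclideanSpace_fin, ENNReal.toReal_ofReal (by positivity), measureReal_def]
  have hbd : ∀ x ∈ ball (0 : Euc n) θ, gradSq v x ≤ K * E := fun x hx => by
    rw [mem_ball, dist_zero_right] at hx
    exact hg x (by linarith)
  have hsub : closedBall (0 : Euc n) θ ⊆ ball 0 1 := closedBall_subset_ball (by linarith)
  constructor
  · have h := norm_setIntegral_le_of_norm_le_const (f := gradSq v)
      (measure_ball_lt_top (μ := volume) (x := (0 : Euc n)) (r := θ))
      (fun x hx => by rw [Real.norm_of_nonneg (gradSq_nonneg v x)]; exact hbd x hx)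
    rw [hVθ] at h
    refine (Real.le_norm_self _).trans (h.trans ?_)
    have h1 : 0 ≤ θ ^ n * E := by positivity
    have h2 : 0 ≤ (16 * K ^ 2 * V + 1) * (θ ^ n * E) := by positivity
    linarith
  · set R := √(K * E) * (2 * θ) with hR
    have hlip : ∀ x ∈ ball (0 : Euc n) θ, ∀ y ∈ ball (0 : Euc n) θ, ‖v y - v x‖ ≤ R := by
      intro x hx y hy
      have h := (convex_ball (0 : Euc n) θ).norm_image_sub_le_of_norm_fderiv_le (𝕜 := ℝ) (f := v)
        (C := √(K * E)) (fun z hz => (hv.contDiffAt (isOpen_ball.mem_nhds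
          (hsub (ball_subset_closedBall hz)))).differentiableAt (by norm_num))
        (fun z hz => (norm_fderiv_le_sqrt v z).trans (Real.sqrt_le_sqrt (hbd z hz))) hx hy
      refine h.trans (mul_le_mul_of_nonneg_left ?_ (Real.sqrt_nonneg _))
      rw [mem_ball, dist_zero_right] at hx hy
      exact (norm_sub_le y x).trans (by linarith)
    have hvi : IntegrableOn v (ball (0 : Euc n) θ) :=
      ((hv.continuousOn.mono hsub).integrableOn_compact (isCompact_closedBall _ _)).mono_set
        ball_subset_closedBall
    have hav : ∀ x ∈ ball (0 : Euc n) θ, ‖v x - (volume (ball (0 : Euc n) θ)).toReal⁻¹ •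
        (∫ y in ball (0 : Euc n) θ, v y)‖ ≤ R := by
      intro x hx
      -- the average lies in the closed ball of radius `R` about `v x`, which contains all `v y`
      have h := (convex_closedBall (v x) R).set_average_mem isClosed_closedBall
        (measure_ball_pos volume (0 : Euc n) hθ0).ne' measure_ball_lt_top.ne
        (ae_restrict_of_forall_mem measurableSet_ball fun y hy => by
          rw [mem_closedBall, dist_eq_norm]; exact hlip x hx y hy) hvi
      rw [mem_closedBall, dist_comm, dist_eq_norm, setAverage_eq] at h
      exact h
    have hR0 : 0 ≤ R := by positivity
    have h := norm_setIntegral_le_of_norm_le_const (C := R ^ 4)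
      (f := fun x => ‖v x - (volume (ball (0 : Euc n) θ)).toReal⁻¹ •
        (∫ y in ball (0 : Euc n) θ, v y)‖ ^ 4)
      (measure_ball_lt_top (μ := volume) (x := (0 : Euc n)) (r := θ))
      (fun x hx => by
        rw [Real.norm_of_nonneg (by positivity)]
        exact pow_le_pow_left₀ (norm_nonneg _) (hav x hx) 4)
    have hR4 : R ^ 4 = 16 * K ^ 2 * E ^ 2 * θ ^ 4 := by
      have : √(K * E) ^ 4 = (K * E) ^ 2 := by
        rw [show (4 : ℕ) = 2 * 2 from rfl, pow_mul, Real.sq_sqrt (by positivity)]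
      rw [hR, mul_pow, this]
      ring
    rw [hVθ, hR4] at h
    refine (Real.le_norm_self _).trans (h.trans ?_)
    have h2 : 0 ≤ (K * V + 1) * (θ ^ (n + 4) * E ^ 2) := by positivity
    have h3 : 16 * K ^ 2 * E ^ 2 * θ ^ 4 * (θ ^ n * V) =
        16 * K ^ 2 * V * (θ ^ (n + 4) * E ^ 2) := by rw [pow_add]; ring
    linarith
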